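/- Fix a stationary policy σ : S → A, a resource h ∈ {1,…,H}, and a cost vector μ : A → ℝ with μ 0 = 0; for y ∈ ℝ let c_y : A → ℝ be the cost vector with c_y(h) = y and c_y(a) = μ a for a ≠ h. Then there exists a unique function D : S → A → ℝ satisfying D s a = (if a = h then 1 else 0) + β ∑_{s'} P s a s' · D s' (σ s') for all s, a, and the policy-evaluation fixed point depends affinely on y: Q^σ_{c_y}(s,a) = Q^σ_{c_0}(s,a) − y · D s a for all y ∈ ℝ and all s, a. -/

import Mathlib

theorem homog_zero_aux
    {S A : Type*} [Fintype S] [Nonempty S]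
    (P : S → A → S → ℝ)
    (hP0 : ∀ s a s', 0 ≤ P s a s') (hP1 : ∀ s a, ∑ s', P s a s' = 1)
    (β : ℝ) (hβ0 : 0 ≤ β) (hβ1 : β < 1) (σ : S → A) (E : S → A → ℝ)
    (hE : ∀ s a, E s a = β * ∑ s', P s a s' * E s' (σ s')) (s : S) (a : A) : E s a = 0 := by
  obtain ⟨m, hm⟩ := Finite.exists_max (fun s => |E s (σ s)|)
  have h1 : |E m (σ m)| ≤ β * |E m (σ m)| := by
    conv_lhs => rw [hE m (σ m)]
    rw [abs_mul, abs_of_nonneg hβ0]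
    apply mul_le_mul_of_nonneg_left _ hβ0
    calc |∑ s', P m (σ m) s' * E s' (σ s')|
        ≤ ∑ s', |P m (σ m) s' * E s' (σ s')| := Finset.abs_sum_le_sum_abs _ _
      _ ≤ ∑ s', P m (σ m) s' * |E m (σ m)| := by
          apply Finset.sum_le_sum
          intro s' _
          rw [abs_mul, abs_of_nonneg (hP0 _ _ _)]
          exact mul_le_mul_of_nonneg_left (hm s') (hP0 _ _ _)
      _ = |E m (σ m)| := by rw [← Finset.sum_mul, hP1, one_mul]
  have h2 : |E m (σ m)| ≤ 0 := by
    by_contra hc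
    push Not at hc
    nlinarith
  have h3 : ∀ s', E s' (σ s') = 0 := fun s' =>
    abs_eq_zero.mp (le_antisymm ((hm s').trans h2) (abs_nonneg _))
  rw [hE]
  simp [h3]

/-- Fix a stationary policy `σ`, a resource `h ≠ 0`, and a cost
vector `μ` with `μ 0 = 0`; for `y : ℝ` let `c_y = Function.update μ h y`.  Then there
is a unique `D : S → A → ℝ` with
`D s a = (if a = h then 1 else 0) + β ∑_{s'} P s a s' · D s' (σ s')`, and the
policy-evaluation fixed point depends affinely on `y`:
`Q^σ_{c_y}(s,a) = Q^σ_{c_0}(s,a) − y · D s a` for all `y`, `s`, `a`. -/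
theorem policy_evaluation_affine_in_resource_cost
    {S : Type*} [Fintype S] [Nonempty S] {H : ℕ}
    (R : S → Fin (H + 1) → ℝ) (P : S → Fin (H + 1) → S → ℝ)
    (hP0 : ∀ s a s', 0 ≤ P s a s') (hP1 : ∀ s a, ∑ s', P s a s' = 1)
    (β : ℝ) (hβ0 : 0 ≤ β) (hβ1 : β < 1)
    (σ : S → Fin (H + 1))
    (h : Fin (H + 1)) (hh : h ≠ 0)
    (μ : Fin (H + 1) → ℝ) (hμ : μ 0 = 0)
    (Qc : ℝ → S → Fin (H + 1) → ℝ)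
    (hQc : ∀ y s a, Qc y s a = R s a - Function.update μ h y a
        + β * ∑ s', P s a s' * Qc y s' (σ s')) :
    (∃! D : S → Fin (H + 1) → ℝ,
      ∀ s a, D s a = (if a = h then (1 : ℝ) else 0)
          + β * ∑ s', P s a s' * D s' (σ s')) ∧
    (∀ D : S → Fin (H + 1) → ℝ,
      (∀ s a, D s a = (if a = h then (1 : ℝ) else 0)
          + β * ∑ s', P s a s' * D s' (σ s')) →
      ∀ (y : ℝ) (s : S) (a : Fin (H + 1)),
        Qc y s a = Qc 0 s a - y * D s a) := by
  have hom := homog_zero_aux P hP0 hP1 β hβ0 hβ1 σ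
  refine ⟨⟨fun s a => Qc 0 s a - Qc 1 s a, ?_, ?_⟩, ?_⟩
  · intro s a
    simp only [mul_sub, Finset.sum_sub_distrib]
    rw [hQc 0 s a, hQc 1 s a]
    by_cases e : a = h
    · subst e
      simp only [Function.update_self, if_true]
      ring
    · simp only [Function.update_of_ne e, if_neg e]
      ring
  · intro D hD
    funext s a
    have := hom (fun s a => D s a - (Qc 0 s a - Qc 1 s a)) (by
      intro s a
      simp only [mul_sub, Finset.sum_sub_distrib]
      rw [hD s a, hQc 0 s a, hQc 1 s a]
      by_cases e : a = h
      · subst e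
        simp only [Function.update_self, if_true]
        ring
      · simp only [Function.update_of_ne e, if_neg e]
        ring) s a
    linarith
  · intro D hD y s a
    have := hom (fun s a => Qc y s a - Qc 0 s a + y * D s a) (by
      intro s a
      simp only [mul_sub, mul_add, Finset.sum_sub_distrib, Finset.sum_add_distrib,
        mul_left_comm _ y, ← Finset.mul_sum]
      rw [hD s a, hQc 0 s a, hQc y s a]
      by_cases e : a = h
      · subst e
        simp only [Function.update_self, if_true]
        ring
      · simp only [Function.update_of_ne e, if_neg e]
        ring) s a
    linarith
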